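/- arXiv:1606.04970 — 3 statements merged into one kernel-verified Lean document; each statement's English description precedes it below -/
import Mathlib

section
/- Let Y ∈ ℳ, μ ∈ ℝ^m, and S = C − 𝒜*(μ). Assume 𝒞 is compact with R = sup{Tr(X) : X ∈ 𝒞} < ∞, assume the identity matrix I_n lies in the image of 𝒜* (i.e., there is ν ∈ ℝ^m with ν_1 A_1 + ... + ν_m A_m = I_n), and assume 2 S Y ∈ T_Yℳ. If ε_H ≥ 0 is such that S + (ε_H/2) I_n is positive semidefinite, then 0 ≤ 2(Tr(C Y Yᵀ) − f*) ≤ ε_H R; in particular no bound on ‖2 S Y‖ is needed. -/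
open Matrix MeasureTheory

noncomputable section

/-- Frobenius inner product `⟨A, B⟩ = Tr(Aᵀ B)`. -/
def frobInner {n p : ℕ} (A B : Matrix (Fin n) (Fin p) ℝ) : ℝ := (Aᵀ * B).trace

/-- Frobenius norm. -/
def frobNorm {n p : ℕ} (A : Matrix (Fin n) (Fin p) ℝ) : ℝ := Real.sqrt (frobInner A A)

/-- The constraint map 𝒜, `𝒜(X) i = Tr(A i * X)`. -/
def Aop {n m : ℕ} (A : Fin m → Matrix (Fin n) (Fin n) ℝ) (X : Matrix (Fin n) (Fin n) ℝ) :
    Fin m → ℝ := fun i => (A i * X).trace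

/-- The adjoint 𝒜*, `𝒜*(μ) = ∑ i, μ i • A i`. -/
def Aadj {n m : ℕ} (A : Fin m → Matrix (Fin n) (Fin n) ℝ) (μ : Fin m → ℝ) :
    Matrix (Fin n) (Fin n) ℝ := ∑ i, μ i • A i

/-- The SDP feasible set 𝒞. -/
def sdpFeas {n m : ℕ} (A : Fin m → Matrix (Fin n) (Fin n) ℝ) (b : Fin m → ℝ) :
    Set (Matrix (Fin n) (Fin n) ℝ) := {X | X.IsSymm ∧ Aop A X = b ∧ X.PosSemidef}

/-- Optimal value `f* = inf {Tr(C X) : X ∈ 𝒞}` of the SDP. -/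
def fstar {n m : ℕ} (A : Fin m → Matrix (Fin n) (Fin n) ℝ) (b : Fin m → ℝ)
    (C : Matrix (Fin n) (Fin n) ℝ) : ℝ := sInf ((fun X => (C * X).trace) '' sdpFeas A b)

/-- The factorized feasible set `ℳ_p = {Y : 𝒜(Y Yᵀ) = b}`. -/
def facFeas {n m : ℕ} (A : Fin m → Matrix (Fin n) (Fin n) ℝ) (b : Fin m → ℝ) (p : ℕ) :
    Set (Matrix (Fin n) (Fin p) ℝ) := {Y | Aop A (Y * Yᵀ) = b}

/-- Tangent space `T_Yℳ = {Ydot : 𝒜(Ydot Yᵀ + Y Ydotᵀ) = 0}`. -/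
def tangentSet {n m p : ℕ} (A : Fin m → Matrix (Fin n) (Fin n) ℝ)
    (Y : Matrix (Fin n) (Fin p) ℝ) : Set (Matrix (Fin n) (Fin p) ℝ) :=
  {Ydot | Aop A (Ydot * Yᵀ + Y * Ydotᵀ) = 0}

/-- Second-order critical point of the factorized problem. -/
def IsSOCP {n m p : ℕ} (A : Fin m → Matrix (Fin n) (Fin n) ℝ) (b : Fin m → ℝ)
    (C : Matrix (Fin n) (Fin n) ℝ) (Y : Matrix (Fin n) (Fin p) ℝ) : Prop :=
  Y ∈ facFeas A b p ∧ ∃ μ : Fin m → ℝ,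
    (C - Aadj A μ) * Y = 0 ∧
    ∀ Ydot ∈ tangentSet A Y, 0 ≤ frobInner Ydot ((C - Aadj A μ) * Ydot)

/-- The real vector space of symmetric `n × n` matrices. -/
def symmSpace (n : ℕ) : Submodule ℝ (Matrix (Fin n) (Fin n) ℝ) where
  carrier := {X | X.IsSymm}
  add_mem' := fun ha hb => ha.add hb
  zero_mem' := Matrix.isSymm_zero
  smul_mem' := fun c X hX => by
    show (c • X)ᵀ = c • X
    rw [Matrix.transpose_smul, hX]

instance (n : ℕ) : MeasurableSpace ↥(symmSpace n) := borel _

/-- A set of symmetric matrices is null if it has measure zero for every additive Haar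
measure on the finite-dimensional real vector space of symmetric `n × n` matrices. -/
def IsNullSymmSet (n : ℕ) (S : Set (Matrix (Fin n) (Fin n) ℝ)) : Prop :=
  ∀ μ : Measure ↥(symmSpace n), μ.IsAddHaarMeasure →
    μ {C : ↥(symmSpace n) | (C : Matrix (Fin n) (Fin n) ℝ) ∈ S} = 0

/-- `Tr(𝒜*(μ) X) = ⟨μ, 𝒜(X)⟩`. -/
theorem trace_Aadj_mul {n m : ℕ} (A : Fin m → Matrix (Fin n) (Fin n) ℝ) (μ : Fin m → ℝ)
    (X : Matrix (Fin n) (Fin n) ℝ) : (Aadj A μ * X).trace = ∑ i, μ i * Aop A X i := by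
  simp [Aadj, Aop, Finset.sum_mul, Matrix.trace_sum]

/-- The trace of a product of two PSD matrices is nonnegative. -/
theorem trace_mul_psd_nonneg {n : ℕ} (P X : Matrix (Fin n) (Fin n) ℝ)
    (hP : P.PosSemidef) (hX : X.PosSemidef) : 0 ≤ (P * X).trace := by
  obtain ⟨B, rfl⟩ : ∃ B : Matrix (Fin n) (Fin n) ℝ, X = Bᴴ * B := by
    open scoped MatrixOrder in
    exact (CStarAlgebra.nonneg_iff_eq_star_mul_self).mp hX.nonneg
  rw [← Matrix.mul_assoc, Matrix.trace_mul_comm, ← Matrix.mul_assoc]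
  exact (hP.mul_mul_conjTranspose_same B).trace_nonneg

/-- refined optimality gap bound when `I ∈ im(𝒜*)` and `2 S Y` is tangent:
`0 ≤ 2(f(Y) − f*) ≤ ε_H R`, with no bound on the gradient needed. -/
theorem optimality_gap_bound_identity_in_range
    (n m p : ℕ) (hn : 0 < n) (hm : 0 < m) (hp : 0 < p)
    (A : Fin m → Matrix (Fin n) (Fin n) ℝ) (hA : ∀ i, (A i).IsSymm) (b : Fin m → ℝ)
    (C : Matrix (Fin n) (Fin n) ℝ) (hC : C.IsSymm)
    (Y : Matrix (Fin n) (Fin p) ℝ) (hY : Y ∈ facFeas A b p)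
    (μ : Fin m → ℝ) (S : Matrix (Fin n) (Fin n) ℝ) (hS : S = C - Aadj A μ)
    (hcompact : IsCompact (sdpFeas A b))
    (R : ℝ) (hR : R = sSup (Matrix.trace '' sdpFeas A b))
    (hI : ∃ ν : Fin m → ℝ, Aadj A ν = 1)
    (htan : (2 : ℝ) • (S * Y) ∈ tangentSet A Y)
    (εH : ℝ) (hεH : 0 ≤ εH)
    (hhess : (S + (εH / 2) • (1 : Matrix (Fin n) (Fin n) ℝ)).PosSemidef) :
    0 ≤ 2 * ((C * (Y * Yᵀ)).trace - fstar A b C) ∧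
    2 * ((C * (Y * Yᵀ)).trace - fstar A b C) ≤ εH * R := by
  obtain ⟨ν, hν⟩ := hI
  have hYY : Y * Yᵀ ∈ sdpFeas A b := by
    refine ⟨by simp [Matrix.IsSymm, Matrix.transpose_mul], hY, ?_⟩
    have := Matrix.posSemidef_self_mul_conjTranspose Y
    rwa [Matrix.conjTranspose_eq_transpose_of_trivial] at this
  have hCX : ∀ X ∈ sdpFeas A b, (C * X).trace = (S * X).trace + ∑ i, μ i * b i := by
    intro X hX
    have h := trace_Aadj_mul A μ X
    rw [hX.2.1] at h
    rw [← h, hS, Matrix.sub_mul, Matrix.trace_sub]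
    ring
  have hSY : (S * (Y * Yᵀ)).trace = 0 := by
    have h := trace_Aadj_mul A ν ((2 : ℝ) • (S * Y) * Yᵀ + Y * ((2 : ℝ) • (S * Y))ᵀ)
    have ht : Aop A ((2 : ℝ) • (S * Y) * Yᵀ + Y * ((2 : ℝ) • (S * Y))ᵀ) = 0 := htan
    rw [ht, hν, Matrix.one_mul, Matrix.trace_add] at h
    have h2 : (Y * ((2 : ℝ) • (S * Y))ᵀ).trace = ((2 : ℝ) • (S * Y) * Yᵀ).trace := by
      rw [← Matrix.trace_transpose, Matrix.transpose_mul, Matrix.transpose_transpose]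
    rw [h2, Matrix.smul_mul, Matrix.trace_smul, Matrix.mul_assoc] at h
    simp at h
    linarith
  have hbdR : BddAbove (Matrix.trace '' sdpFeas A b) :=
    (hcompact.image (continuous_id.matrix_trace)).bddAbove
  have hlow : ∀ X ∈ sdpFeas A b, ∑ i, μ i * b i - εH / 2 * R ≤ (C * X).trace := by
    intro X hX
    have h1 : X.trace ≤ R := hR ▸ le_csSup hbdR ⟨X, hX, rfl⟩
    have h2 := trace_mul_psd_nonneg _ X hhess hX.2.2
    rw [Matrix.add_mul, Matrix.trace_add, Matrix.smul_mul, Matrix.one_mul,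
      Matrix.trace_smul, smul_eq_mul] at h2
    have h3 := mul_le_mul_of_nonneg_left h1 (by positivity : 0 ≤ εH / 2)
    rw [hCX X hX]
    linarith
  have hf1 : fstar A b C ≤ (C * (Y * Yᵀ)).trace := by
    refine csInf_le ⟨∑ i, μ i * b i - εH / 2 * R, ?_⟩ ⟨_, hYY, rfl⟩
    rintro _ ⟨X, hX, rfl⟩
    exact hlow X hX
  have hf2 : ∑ i, μ i * b i - εH / 2 * R ≤ fstar A b C := by
    refine le_csInf ⟨_, _, hYY, rfl⟩ ?_
    rintro _ ⟨X, hX, rfl⟩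
    exact hlow X hX
  have h4 := hCX _ hYY
  rw [hSY] at h4
  constructor <;> linarith

end
end

section
/- Assume p(p+1)/2 > m. Then the set of symmetric n×n matrices C for which there exists a first-order critical point Y of the factorized problem with full column rank — that is, Y ∈ ℳ with rank(Y) = p and μ ∈ ℝ^m such that (C − 𝒜*(μ)) Y = 0 — is a null set of symmetric matrices. Equivalently, for almost all C, every first-order critical point of the factorized problem is column rank deficient. -/
open Matrix MeasureTheory

noncomputable section

section Helpers

attribute [local instance] Matrix.normedAddCommGroup Matrix.normedSpace

open MeasureTheory.Measure in
lemma null_of_dimH_lt {E : Type*} [NormedAddCommGroup E] [NormedSpace ℝ E]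
    [FiniteDimensional ℝ E] [MeasurableSpace E] [BorelSpace E] (ν : Measure E)
    [ν.IsAddHaarMeasure] (T : Set E) (d : ℕ) (hdim : dimH T ≤ d)
    (hlt : d < Module.finrank ℝ E) : ν T = 0 := by
  have hz : μH[Module.finrank ℝ E] T = 0 := by
    have := hausdorffMeasure_of_dimH_lt (s := T)
      (d := (Module.finrank ℝ E : NNReal)) (lt_of_le_of_lt hdim (by
        exact_mod_cast hlt))
    simpa using this
  exact Measure.absolutelyContinuous_isAddHaarMeasure ν
    (μH[Module.finrank ℝ E] : Measure E) hz

/-- Symmetric matrix attached to a function on unordered pairs. -/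
def symMat {q : ℕ} (s : Sym2 (Fin q) → ℝ) : Matrix (Fin q) (Fin q) ℝ :=
  Matrix.of fun i j => s s(i, j)

lemma symMat_surj {q : ℕ} (D : Matrix (Fin q) (Fin q) ℝ) (hD : D.IsSymm) :
    ∃ s, symMat s = D := by
  refine ⟨Sym2.lift ⟨fun i j => D i j, fun i j => (hD.apply j i)⟩, ?_⟩
  ext i j
  simp [symMat]

lemma finrank_symm_ge (n : ℕ) : (n + 1).choose 2 ≤ Module.finrank ℝ ↥(symmSpace n) := by
  let L : (Sym2 (Fin n) → ℝ) →ₗ[ℝ] ↥(symmSpace n) :=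
    { toFun := fun s => ⟨symMat s, by
        show (symMat s)ᵀ = symMat s
        ext i j
        simp [symMat, Sym2.eq_swap]⟩
      map_add' := fun s t => rfl
      map_smul' := fun c s => rfl }
  have hL : Function.Injective L := by
    intro s t h
    funext z
    induction z using Sym2.ind with
    | _ i j => exact congrFun (congrFun (congrArg Subtype.val h) i) j
  have := LinearMap.finrank_le_finrank_of_injective hL
  rwa [Module.finrank_fintype_fun_eq_card, Sym2.card, Fintype.card_fin] at this

/-- The polynomial parametrization. -/
def param {n m p q : ℕ} (A : Fin m → Matrix (Fin n) (Fin n) ℝ) (σ : Fin p ⊕ Fin q ≃ Fin n)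
    (x : Matrix (Fin q) (Fin p) ℝ × (Sym2 (Fin q) → ℝ) × (Fin m → ℝ)) :
    Matrix (Fin n) (Fin n) ℝ :=
  Aadj A x.2.2 + (fromRows (-x.1ᵀ) 1 * symMat x.2.1 * (fromRows (-x.1ᵀ) 1)ᵀ).submatrix
    σ.symm σ.symm

lemma param_contDiff {n m p q : ℕ} (A : Fin m → Matrix (Fin n) (Fin n) ℝ)
    (σ : Fin p ⊕ Fin q ≃ Fin n) : ContDiff ℝ 1 (param A σ) := by
  have hP : ∀ (i : Fin p ⊕ Fin q) (k : Fin q), ContDiff ℝ 1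
      (fun x : Matrix (Fin q) (Fin p) ℝ × (Sym2 (Fin q) → ℝ) × (Fin m → ℝ) =>
        (fromRows (-x.1ᵀ) (1 : Matrix (Fin q) (Fin q) ℝ)) i k) := by
    rintro (i | i) k
    · simp only [fromRows_apply_inl, Matrix.neg_apply, Matrix.transpose_apply]
      have h1 : ContDiff ℝ 1 (fun M : Matrix (Fin q) (Fin p) ℝ => M k i) :=
        (contDiff_apply_apply ℝ ℝ k i : ContDiff ℝ 1 (fun M : Fin q → Fin p → ℝ => M k i))
      exact (h1.comp contDiff_fst).neg
    · simp only [fromRows_apply_inr]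
      exact contDiff_const
  have hS : ∀ z : Sym2 (Fin q), ContDiff ℝ 1
      (fun x : Matrix (Fin q) (Fin p) ℝ × (Sym2 (Fin q) → ℝ) × (Fin m → ℝ) => x.2.1 z) := by
    intro z
    exact (contDiff_apply ℝ ℝ z).comp (contDiff_fst.comp contDiff_snd)
  have hM : ∀ z : Fin m, ContDiff ℝ 1
      (fun x : Matrix (Fin q) (Fin p) ℝ × (Sym2 (Fin q) → ℝ) × (Fin m → ℝ) => x.2.2 z) := by
    intro z
    exact (contDiff_apply ℝ ℝ z).comp (contDiff_snd.comp contDiff_snd)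
  refine contDiff_pi.2 fun i => contDiff_pi.2 fun j => ?_
  simp only [param, Aadj, Matrix.add_apply, Matrix.sum_apply, Matrix.smul_apply, smul_eq_mul,
    Matrix.submatrix_apply, Matrix.mul_apply, Matrix.transpose_apply, symMat, Matrix.of_apply]
  refine ContDiff.add (ContDiff.sum fun k _ => (hM k).mul contDiff_const) ?_
  exact ContDiff.sum fun k _ => (ContDiff.sum fun l _ => (hP _ _).mul (hS _)).mul (hP _ _)

lemma exists_rows {n p q : ℕ} (hn : n = p + q) (Y : Matrix (Fin n) (Fin p) ℝ)
    (hY : Y.rank = p) : ∃ σ : Fin p ⊕ Fin q ≃ Fin n,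
      IsUnit (Y.submatrix (fun i => σ (Sum.inl i)) id) := by
  obtain ⟨κ, a, ha, hspan, hli⟩ := exists_linearIndependent' ℝ Y.row
  have : Finite κ := Finite.of_injective a ha
  have : Fintype κ := Fintype.ofFinite κ
  have hc : Fintype.card κ = p := by
    rw [← hY, rank_eq_finrank_span_row, ← hspan, finrank_span_eq_card hli]
  let e : Fin p ≃ κ := (Fintype.equivFinOfCardEq hc).symm
  have hinj : Function.Injective (a ∘ e) := ha.comp e.injective
  have hcc : Fintype.card ↥((Set.range (a ∘ e))ᶜ : Set (Fin n)) = q := by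
    rw [Fintype.card_compl_set, Set.card_range_of_injective hinj]
    simp [hn]
  let σ : Fin p ⊕ Fin q ≃ Fin n :=
    (Equiv.sumCongr (Equiv.ofInjective _ hinj) (Fintype.equivFinOfCardEq hcc).symm).trans
      (Equiv.Set.sumCompl (Set.range (a ∘ e)))
  refine ⟨σ, ?_⟩
  rw [← linearIndependent_rows_iff_isUnit]
  exact hli.comp e e.injective

lemma mem_range_param {n m p q : ℕ} (A : Fin m → Matrix (Fin n) (Fin n) ℝ)
    (hA : ∀ i, (A i).IsSymm) (σ : Fin p ⊕ Fin q ≃ Fin n)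
    (C : Matrix (Fin n) (Fin n) ℝ) (hC : C.IsSymm) (Y : Matrix (Fin n) (Fin p) ℝ)
    (μ : Fin m → ℝ) (hY : (C - Aadj A μ) * Y = 0)
    (hu : IsUnit (Y.submatrix (fun i => σ (Sum.inl i)) id)) :
    C ∈ Set.range (param A σ) := by
  set N := C - Aadj A μ with hN
  have hAs : (Aadj A μ).IsSymm := by
    show (Aadj A μ)ᵀ = _
    simp only [Aadj, Matrix.transpose_sum, Matrix.transpose_smul, fun i => (hA i).eq]
  have hNs : N.IsSymm := hC.sub hAs
  set Nσ := N.submatrix σ σ with hNσ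
  have hNσs : Nσ.IsSymm := hNs.submatrix σ
  set Y1 := Y.submatrix (fun i => σ (Sum.inl i)) id with hY1
  set Y2 := Y.submatrix (fun i => σ (Sum.inr i)) id with hY2
  have hYσ : Y.submatrix σ id = fromRows Y1 Y2 := by
    ext (i | i) j <;> rfl
  have h0 : Nσ * fromRows Y1 Y2 = 0 := by
    rw [← hYσ, hNσ, Matrix.submatrix_mul_equiv, hY]
    rfl
  have hd : Y1 * Y1⁻¹ = 1 := Matrix.mul_nonsing_inv _ ((Matrix.isUnit_iff_isUnit_det _).1 hu)
  set Z := Y2 * Y1⁻¹ with hZ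
  have h1 : Nσ * fromRows (1 : Matrix (Fin p) (Fin p) ℝ) Z = 0 := by
    have : fromRows (1 : Matrix (Fin p) (Fin p) ℝ) Z = fromRows Y1 Y2 * Y1⁻¹ := by rw [fromRows_mul, hd]
    rw [this, ← Matrix.mul_assoc, h0, Matrix.zero_mul]
  rw [← fromBlocks_toBlocks Nσ, fromBlocks_mul_fromRows] at h1
  have h11 : Nσ.toBlocks₁₁ + Nσ.toBlocks₁₂ * Z = 0 := by
    ext i j
    simpa using congrFun (congrFun h1 (Sum.inl i)) j
  have h21 : Nσ.toBlocks₂₁ + Nσ.toBlocks₂₂ * Z = 0 := by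
    ext i j
    simpa using congrFun (congrFun h1 (Sum.inr i)) j
  have hDs : (Nσ.toBlocks₂₂).IsSymm := by
    ext i j
    exact hNσs.apply _ _
  have hBt : Nσ.toBlocks₁₂ = (Nσ.toBlocks₂₁)ᵀ := by
    ext i j
    exact hNσs.apply _ _
  obtain ⟨s, hs⟩ := symMat_surj _ hDs
  have e21 : Nσ.toBlocks₂₁ = -(symMat s * Z) := by rw [hs]; exact eq_neg_of_add_eq_zero_left h21
  have e12 : Nσ.toBlocks₁₂ = -(Zᵀ * symMat s) := by
    rw [hBt, e21, Matrix.transpose_neg, Matrix.transpose_mul, hs, hDs.eq]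
  have e11 : Nσ.toBlocks₁₁ = Zᵀ * symMat s * Z := by
    rw [eq_neg_of_add_eq_zero_left h11, e12, Matrix.neg_mul, neg_neg]
  have key : fromRows (-Zᵀ) 1 * symMat s * (fromRows (-Zᵀ) 1)ᵀ = Nσ := by
    rw [← fromBlocks_toBlocks Nσ, e11, e12, e21, ← hs, transpose_fromRows, fromRows_mul,
      fromRows_mul_fromCols]
    simp
  refine ⟨(Z, s, μ), ?_⟩
  simp only [param, key]
  rw [hNσ, Matrix.submatrix_submatrix]
  simp [hN]

open MeasureTheory.Measure in
lemma null_aux (n m p : ℕ)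
    (A : Fin m → Matrix (Fin n) (Fin n) ℝ) (hA : ∀ i, (A i).IsSymm) (b : Fin m → ℝ)
    (hpm : 2 * m < p * (p + 1)) :
    IsNullSymmSet n {C | ∃ Y : Matrix (Fin n) (Fin p) ℝ,
      Y ∈ facFeas A b p ∧ Y.rank = p ∧
      ∃ μ : Fin m → ℝ, (C - Aadj A μ) * Y = 0} := by
  intro ν hν
  set T := {C : ↥(symmSpace n) | (C : Matrix (Fin n) (Fin n) ℝ) ∈
    {C | ∃ Y : Matrix (Fin n) (Fin p) ℝ, Y ∈ facFeas A b p ∧ Y.rank = p ∧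
      ∃ μ : Fin m → ℝ, (C - Aadj A μ) * Y = 0}} with hT
  by_cases hnp : n < p
  · have : T = ∅ := by
      rw [Set.eq_empty_iff_forall_notMem]
      rintro C ⟨Y, -, hr, -⟩
      have := Y.rank_le_height
      omega
    rw [this, measure_empty]
  obtain ⟨q, hq⟩ : ∃ q, n = p + q := ⟨n - p, by omega⟩
  have hsub : (Subtype.val '' T : Set (Matrix (Fin n) (Fin n) ℝ)) ⊆
      ⋃ σ : Fin p ⊕ Fin q ≃ Fin n, Set.range (param A σ) := by
    rintro _ ⟨C, ⟨Y, -, hr, μ, hμ⟩, rfl⟩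
    obtain ⟨σ, hσ⟩ := exists_rows hq Y hr
    exact Set.mem_iUnion.2 ⟨σ, mem_range_param A hA σ _ C.2 Y μ hμ hσ⟩
  have hdim : dimH T ≤ (q * p + (q + 1).choose 2 + m : ℕ) := by
    have hiso : Isometry (Subtype.val : ↥(symmSpace n) → Matrix (Fin n) (Fin n) ℝ) :=
      isometry_subtype_coe
    rw [← hiso.dimH_image]
    refine (dimH_mono hsub).trans ?_
    rw [dimH_iUnion]
    refine iSup_le fun σ => ?_
    refine (ContDiff.dimH_range_le (param_contDiff A σ)).trans ?_
    rw [Module.finrank_prod, Module.finrank_prod, Module.finrank_matrix,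
      Module.finrank_fintype_fun_eq_card, Module.finrank_fintype_fun_eq_card, Sym2.card]
    simp [add_assoc]
  have hlt : q * p + (q + 1).choose 2 + m < Module.finrank ℝ ↥(symmSpace n) := by
    refine lt_of_lt_of_le ?_ (finrank_symm_ge n)
    have h1 : ∀ k : ℕ, 2 * (k + 1).choose 2 = k * (k + 1) := by
      intro k
      have := Nat.triangle_succ k
      have h2 := Nat.choose_two_right (k + 1)
      have h3 := Nat.even_mul_succ_self k
      rw [h2, Nat.add_sub_cancel, mul_comm (k + 1) k]
      exact Nat.two_mul_div_two_of_even h3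
    have a1 := h1 q
    have a2 := h1 n
    subst hq
    nlinarith
  have hB : @BorelSpace ↥(symmSpace n)
      (inferInstance : NormedAddCommGroup ↥(symmSpace n)).toMetricSpace.toPseudoMetricSpace.toUniformSpace.toTopologicalSpace
      inferInstance := ⟨rfl⟩
  exact @null_of_dimH_lt ↥(symmSpace n) _ _ _ _ hB ν hν T _ hdim hlt

end Helpers

/-- if `p(p+1)/2 > m`, then for almost all symmetric `C` every first-order
critical point of the factorized problem is column-rank deficient: the set of `C` admitting
a full-column-rank critical point is null. -/
theorem generic_critical_points_rank_deficient
    (n m p : ℕ) (hn : 0 < n) (hm : 0 < m) (hp : 0 < p)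
    (A : Fin m → Matrix (Fin n) (Fin n) ℝ) (hA : ∀ i, (A i).IsSymm) (b : Fin m → ℝ)
    (hpm : 2 * m < p * (p + 1)) :
    IsNullSymmSet n {C | ∃ Y : Matrix (Fin n) (Fin p) ℝ,
      Y ∈ facFeas A b p ∧ Y.rank = p ∧
      ∃ μ : Fin m → ℝ, (C - Aadj A μ) * Y = 0} := by
  exact null_aux n m p A hA b hpm

end
end

section
/- Assume p(p+1)/2 > n. Then the set of symmetric n×n matrices C for which the following fails is a null set of symmetric matrices: every Y ∈ ℝ^{n×p} with diag(Y Yᵀ) = 1 such that there exists μ ∈ ℝ^n with (C − Diag(μ)) Y = 0 and ⟨Ẏ, (C − Diag(μ)) Ẏ⟩ ≥ 0 for all Ẏ ∈ ℝ^{n×p} with diag(Ẏ Yᵀ + Y Ẏᵀ) = 0, satisfies Tr(C Y Yᵀ) ≤ Tr(C Z Zᵀ) for all Z ∈ ℝ^{n×p} with diag(Z Zᵀ) = 1, and moreover Tr(C Y Yᵀ) ≤ Tr(C X) for every symmetric positive semidefinite X with diag(X) = 1. In words: for almost all C, every second-order critical point of the Max-Cut Burer–Monteiro problem is a global optimum and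 Y Yᵀ solves the Max-Cut SDP. -/
open Matrix MeasureTheory

noncomputable section

open scoped MatrixOrder Matrix.Norms.L2Operator in
lemma psd_factor {n : ℕ} (X : Matrix (Fin n) (Fin n) ℝ) (hX : X.PosSemidef) :
    ∃ B : Matrix (Fin n) (Fin n) ℝ, X = Bᴴ * B :=
  CStarAlgebra.nonneg_iff_eq_star_mul_self.mp hX.nonneg

attribute [local instance] Matrix.normedAddCommGroup Matrix.normedSpace

/-- The range of a `C¹` map from a space of smaller dimension is null. -/
lemma null_range_of_finrank_lt {E F : Type*} [NormedAddCommGroup E] [NormedSpace ℝ E]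
    [FiniteDimensional ℝ E] [NormedAddCommGroup F] [NormedSpace ℝ F] [FiniteDimensional ℝ F]
    [MeasurableSpace F] (_ : BorelSpace F) (μ : Measure F) (_ : μ.IsAddHaarMeasure) (f : E → F)
    (hf : ContDiff ℝ 1 f) (h : Module.finrank ℝ E < Module.finrank ℝ F) :
    μ (Set.range f) = 0 := by
  have h1 : μ ≪ Measure.hausdorffMeasure (X := F) (((Module.finrank ℝ F : ℕ) : NNReal) : ℝ) := by
    rw [NNReal.coe_natCast,
      Measure.isAddLeftInvariant_eq_smul μ (Measure.hausdorffMeasure (Module.finrank ℝ F : ℝ))]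
    exact Measure.smul_absolutelyContinuous
  refine measure_zero_of_dimH_lt h1 (lt_of_le_of_lt hf.dimH_range_le ?_)
  exact_mod_cast h

/-- Auxiliary factor `P`. -/
def pFac {n p q : ℕ} (e : Fin p ⊕ Fin q ≃ Fin n) (W : Fin q → Fin p → ℝ) (i : Fin n)
    (a : Fin q) : ℝ :=
  Sum.elim (fun k => - W a k) (fun b => if b = a then 1 else 0) (e.symm i)

/-- The parametrization of the bad cost matrices. -/
def gPar {n p q : ℕ} (e : Fin p ⊕ Fin q ≃ Fin n)
    (x : (Sym2 (Fin q) → ℝ) × (Fin q → Fin p → ℝ) × (Fin n → ℝ)) : Fin n → Fin n → ℝ :=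
  fun i j => (∑ b, (∑ a, x.1 s(b, a) * pFac e x.2.1 i a) * pFac e x.2.1 j b)
    + if i = j then x.2.2 i else 0

lemma gPar_contDiff {n p q : ℕ} (e : Fin p ⊕ Fin q ≃ Fin n) : ContDiff ℝ 1 (gPar e) := by
  have hP : ∀ (i : Fin n) (a : Fin q), ContDiff ℝ 1
      (fun x : (Sym2 (Fin q) → ℝ) × (Fin q → Fin p → ℝ) × (Fin n → ℝ) => pFac e x.2.1 i a) := by
    intro i a
    unfold pFac
    rcases e.symm i with k | b
    · simp only [Sum.elim_inl]
      fun_prop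
    · simp only [Sum.elim_inr]
      fun_prop
  unfold gPar
  refine contDiff_pi.2 fun i => contDiff_pi.2 fun j => ?_
  refine ContDiff.add ?_ ?_
  · refine ContDiff.sum fun b _ => ContDiff.mul (ContDiff.sum fun a _ => ?_) (hP j b)
    exact ContDiff.mul (by fun_prop) (hP i a)
  · split_ifs <;> fun_prop

lemma choose_le_finrank_symmSpace (n : ℕ) :
    (n + 1).choose 2 ≤ Module.finrank ℝ (symmSpace n) := by
  let L : (Sym2 (Fin n) → ℝ) →ₗ[ℝ] symmSpace n :=
    { toFun := fun t => ⟨Matrix.of fun i j => t s(i, j), by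
        show (Matrix.of fun i j => t s(i, j))ᵀ = _
        ext i j
        simp [Sym2.eq_swap]⟩
      map_add' := fun s t => rfl
      map_smul' := fun c t => rfl }
  have hL : Function.Injective L := by
    intro s t h
    funext z
    induction z with
    | _ i j =>
      exact congrFun (congrFun (congrArg Subtype.val h) i) j
  have := LinearMap.finrank_le_finrank_of_injective hL
  rwa [Module.finrank_fintype_fun_eq_card, Sym2.card, Fintype.card_fin] at this

lemma dim_ineq {p q n : ℕ} (hn : n = p + q) (hpn : 2 * n < p * (p + 1)) :
    (q + 1).choose 2 + (q * p + n) < (n + 1).choose 2 := by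
  have key : ∀ m : ℕ, 2 * (m + 1).choose 2 = m * (m + 1) := by
    intro m
    induction m with
    | zero => rfl
    | succ k ih =>
      rw [Nat.choose_succ_succ' (k + 1) 1, Nat.choose_one_right]
      linarith
  have h1 := key q
  have h2 := key n
  subst hn
  nlinarith

/-- Matrices hit by the parametrization form a null set. -/
lemma null_param {n p q : ℕ} (hpn : 2 * n < p * (p + 1)) (e : Fin p ⊕ Fin q ≃ Fin n)
    (μ : Measure ↥(symmSpace n)) (hμ : μ.IsAddHaarMeasure) :
    μ {C : ↥(symmSpace n) | ∃ x, (C : Matrix (Fin n) (Fin n) ℝ) = gPar e x} = 0 := by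
  have hcard : n = p + q := by
    have := Fintype.card_congr e
    simpa using this.symm
  obtain ⟨π, hπ⟩ := LinearMap.exists_leftInverse_of_injective (symmSpace n).subtype
    (Submodule.ker_subtype _)
  let π' : (Fin n → Fin n → ℝ) →ₗ[ℝ] symmSpace n := π
  have hsm : ContDiff ℝ 1 (fun x => π' (gPar e x)) :=
    (LinearMap.toContinuousLinearMap π').contDiff.comp (gPar_contDiff e)
  refine measure_mono_null ?_ (null_range_of_finrank_lt ⟨rfl⟩ μ hμ _ hsm ?_)
  · rintro C ⟨x, hx⟩
    refine ⟨x, ?_⟩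
    have := LinearMap.congr_fun hπ C
    simp only [LinearMap.comp_apply, LinearMap.id_apply, Submodule.subtype_apply] at this
    rw [hx] at this
    exact this
  · refine lt_of_lt_of_le ?_ (choose_le_finrank_symmSpace n)
    have := dim_ineq hcard hpn
    simpa [Module.finrank_prod, Module.finrank_pi_fintype, Sym2.card] using this

/-- Choose `p` independent rows. -/
lemma exists_rows_s17 {n p : ℕ} (Y : Matrix (Fin n) (Fin p) ℝ)
    (hY : ∀ z : Fin p → ℝ, Y *ᵥ z = 0 → z = 0) :
    ∃ e : Fin p ⊕ Fin (n - p) ≃ Fin n, LinearIndependent ℝ (fun k => Y (e (Sum.inl k))) ∧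
      Submodule.span ℝ (Set.range (fun k => Y (e (Sum.inl k)))) = ⊤ := by
  have hinj : Function.Injective Y.mulVec := by
    intro a b hab
    have := hY (a - b) (by rw [Matrix.mulVec_sub]; exact sub_eq_zero.2 hab)
    exact sub_eq_zero.1 this
  have hrank : Y.rank = p := by
    have h1 : LinearIndependent ℝ Y.col := Matrix.mulVec_injective_iff.1 hinj
    rw [Matrix.rank_eq_finrank_span_cols, finrank_span_eq_card h1]
    simp
  have hspan : Submodule.span ℝ (Set.range Y.row) = ⊤ := by
    apply Submodule.eq_top_of_finrank_eq
    rw [← Matrix.rank_eq_finrank_span_row, hrank]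
    simp
  obtain ⟨κ, a, ha, hsp, hli⟩ := exists_linearIndependent' ℝ Y.row
  have : Finite κ := Finite.of_injective a ha
  have := Fintype.ofFinite κ
  have hsp' := hsp.trans hspan
  have hc : Fintype.card κ = p := by
    have := finrank_span_eq_card hli
    rw [hsp', finrank_top] at this
    simpa using this.symm
  let φ : Fin p ≃ κ := (Fintype.equivFinOfCardEq hc).symm
  let b : Fin p → Fin n := a ∘ φ
  have hb : Function.Injective b := ha.comp φ.injective
  classical
  have hcompl : Fintype.card ((Set.range b)ᶜ : Set (Fin n)) = n - p := by
    rw [Fintype.card_compl_set, Set.card_range_of_injective hb]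
    simp
  let e : Fin p ⊕ Fin (n - p) ≃ Fin n :=
    (Equiv.sumCongr (Equiv.ofInjective b hb) (Fintype.equivFinOfCardEq hcompl).symm).trans
      (Equiv.Set.sumCompl (Set.range b))
  have he : ∀ k, e (Sum.inl k) = b k := by
    intro k
    simp [e]
  have hfun : (fun k => Y (e (Sum.inl k))) = (Y.row ∘ a) ∘ φ := by
    funext k
    rw [he]
    rfl
  refine ⟨e, ?_, ?_⟩
  · rw [hfun]
    exact hli.comp _ φ.injective
  · rw [hfun, Set.range_comp, φ.surjective.range_eq, Set.image_univ]
    exact hsp'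

lemma exists_param {n p : ℕ} (C : Matrix (Fin n) (Fin n) ℝ) (hC : C.IsSymm)
    (Y : Matrix (Fin n) (Fin p) ℝ) (hY : ∀ z : Fin p → ℝ, Y *ᵥ z = 0 → z = 0)
    (μ : Fin n → ℝ) (hS : (C - Matrix.diagonal μ) * Y = 0) :
    ∃ e : Fin p ⊕ Fin (n - p) ≃ Fin n, ∃ x, C = gPar e x := by
  obtain ⟨e, hli, hsp⟩ := exists_rows_s17 Y hY
  set S := C - Matrix.diagonal μ with hSdef
  have hsymm : ∀ i j, S i j = S j i := by
    intro i j
    have : S.IsSymm := hC.sub (Matrix.isSymm_diagonal μ)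
    exact this.apply j i
  have hW : ∀ a : Fin (n - p), ∃ c : Fin p → ℝ,
      ∑ k, c k • Y (e (Sum.inl k)) = Y (e (Sum.inr a)) := by
    intro a
    apply (Submodule.mem_span_range_iff_exists_fun ℝ).1
    rw [hsp]
    trivial
  choose W hW using hW
  have hrow : ∀ i k, S i (e (Sum.inl k)) + ∑ a, S i (e (Sum.inr a)) * W a k = 0 := by
    intro i
    apply Fintype.linearIndependent_iff.1 hli
    have h0 : ∑ j, S i j • Y j = 0 := by
      funext l
      have := congrFun (congrFun hS i) l
      rw [Matrix.mul_apply] at this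
      simpa [Finset.sum_apply] using this
    rw [← e.sum_comp, Fintype.sum_sum_type] at h0
    rw [← h0]
    simp only [add_smul, Finset.sum_add_distrib, Finset.sum_smul]
    congr 1
    rw [Finset.sum_comm]
    refine Finset.sum_congr rfl fun a _ => ?_
    rw [← hW a, Finset.smul_sum]
    simp only [mul_smul]
  have hfac : ∀ i j, S i j = ∑ b, S i (e (Sum.inr b)) * pFac e W j b := by
    intro i j
    obtain ⟨j, rfl⟩ := e.surjective j
    rcases j with k | b
    · have := hrow i k
      simp only [pFac, Equiv.symm_apply_apply, Sum.elim_inl, mul_neg, Finset.sum_neg_distrib]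
      linarith
    · simp [pFac]
  refine ⟨e, (fun z => Sym2.lift ⟨fun a b => S (e (Sum.inr a)) (e (Sum.inr b)),
    fun a b => hsymm _ _⟩ z, W, μ), ?_⟩
  ext i j
  have h1 : C i j = S i j + if i = j then μ i else 0 := by
    simp [hSdef, Matrix.diagonal_apply]
  rw [h1, hfac i j]
  simp only [gPar, Sym2.lift_mk]
  congr 1
  refine Finset.sum_congr rfl fun b _ => ?_
  rw [hsymm i, hfac _ i]

lemma psd_of_singular {n p : ℕ} (S : Matrix (Fin n) (Fin n) ℝ) (Y : Matrix (Fin n) (Fin p) ℝ)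
    (h : ∀ Ydot : Matrix (Fin n) (Fin p) ℝ,
          (∀ i, (Ydot * Yᵀ + Y * Ydotᵀ) i i = 0) → 0 ≤ frobInner Ydot (S * Ydot))
    (z : Fin p → ℝ) (hz : Y *ᵥ z = 0) (hz0 : z ≠ 0) (x : Fin n → ℝ) :
    0 ≤ x ⬝ᵥ (S *ᵥ x) := by
  have h1 : Matrix.vecMulVec x z * Yᵀ = 0 := by
    rw [Matrix.vecMulVec_mul, Matrix.vecMul_transpose, hz]
    simp
  have h2 : Y * (Matrix.vecMulVec x z)ᵀ = 0 := by
    rw [← Matrix.transpose_transpose Y, ← Matrix.transpose_mul, h1]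
    simp
  have h3 := h (Matrix.vecMulVec x z) (by intro i; rw [h1, h2]; simp)
  have h4 : frobInner (Matrix.vecMulVec x z) (S * Matrix.vecMulVec x z)
      = (x ⬝ᵥ (S *ᵥ x)) * (z ⬝ᵥ z) := by
    unfold frobInner
    rw [Matrix.mul_vecMulVec, Matrix.transpose_vecMulVec, Matrix.vecMulVec_mul_vecMulVec,
      Matrix.trace_vecMulVec]
    simp [dotProduct_smul, mul_comm]
  have h5 : 0 < z ⬝ᵥ z := by
    have h6 : 0 ≤ z ⬝ᵥ z := Finset.sum_nonneg fun i _ => mul_self_nonneg _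
    exact lt_of_le_of_ne h6 fun h => hz0 (dotProduct_self_eq_zero.1 h.symm)
  rw [h4] at h3
  exact nonneg_of_mul_nonneg_left h3 h5

lemma opt_of_psd {n p : ℕ} (C : Matrix (Fin n) (Fin n) ℝ) (Y : Matrix (Fin n) (Fin p) ℝ)
    (hY : ∀ i, (Y * Yᵀ) i i = 1) (μ : Fin n → ℝ) (hS : (C - Matrix.diagonal μ) * Y = 0)
    (hpsd : ∀ x : Fin n → ℝ, 0 ≤ x ⬝ᵥ ((C - Matrix.diagonal μ) *ᵥ x))
    (X : Matrix (Fin n) (Fin n) ℝ) (hX : X.PosSemidef) (hd : ∀ i, X i i = 1) :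
    (C * (Y * Yᵀ)).trace ≤ (C * X).trace := by
  set S := C - Matrix.diagonal μ with hSdef
  have hdec : ∀ M : Matrix (Fin n) (Fin n) ℝ, (∀ i, M i i = 1) →
      (C * M).trace = (S * M).trace + ∑ i, μ i := by
    intro M hM
    have : C = S + Matrix.diagonal μ := by simp [hSdef]
    rw [this, Matrix.add_mul, Matrix.trace_add]
    congr 1
    simp [Matrix.trace, Matrix.diagonal_mul, hM]
  rw [hdec _ hY, hdec _ hd, ← Matrix.mul_assoc, hS]
  obtain ⟨B, rfl⟩ : ∃ B : Matrix (Fin n) (Fin n) ℝ, X = Bᴴ * B := psd_factor X hX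
  have : 0 ≤ (S * (Bᴴ * B)).trace := by
    rw [← Matrix.mul_assoc, Matrix.trace_mul_comm]
    refine Finset.sum_nonneg fun i _ => ?_
    have h := hpsd (B i)
    have h2 : (B * (S * Bᴴ)).diag i = B i ⬝ᵥ (S *ᵥ B i) := by
      simp [Matrix.diag_apply, Matrix.mul_apply, dotProduct, Matrix.mulVec]
    rw [h2]
    exact h
  simpa using this

/-- for `p(p+1)/2 > n` and almost all symmetric `C`, every second-order
critical point of the Max-Cut Burer–Monteiro problem is globally optimal and `Y Yᵀ`
solves the Max-Cut SDP. -/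
theorem maxcut_generic_global_optimality
    (n p : ℕ) (hn : 0 < n) (hp : 0 < p) (hpn : 2 * n < p * (p + 1)) :
    IsNullSymmSet n {C | ¬ ∀ Y : Matrix (Fin n) (Fin p) ℝ,
      (∀ i, (Y * Yᵀ) i i = 1) →
      (∃ μ : Fin n → ℝ, (C - Matrix.diagonal μ) * Y = 0 ∧
        ∀ Ydot : Matrix (Fin n) (Fin p) ℝ,
          (∀ i, (Ydot * Yᵀ + Y * Ydotᵀ) i i = 0) →
          0 ≤ frobInner Ydot ((C - Matrix.diagonal μ) * Ydot)) →
      ((∀ Z : Matrix (Fin n) (Fin p) ℝ, (∀ i, (Z * Zᵀ) i i = 1) →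
          (C * (Y * Yᵀ)).trace ≤ (C * (Z * Zᵀ)).trace) ∧
       (∀ X : Matrix (Fin n) (Fin n) ℝ, X.IsSymm → X.PosSemidef →
          (∀ i, X i i = 1) → (C * (Y * Yᵀ)).trace ≤ (C * X).trace))} := by
  intro μ hμ
  refine measure_mono_null (t := ⋃ e : Fin p ⊕ Fin (n - p) ≃ Fin n,
    {C : ↥(symmSpace n) | ∃ x, (C : Matrix (Fin n) (Fin n) ℝ) = gPar e x}) ?_
    (measure_iUnion_null fun e => null_param hpn e μ hμ)
  intro C hC
  by_contra hcon
  refine hC fun Y hY hex => ?_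
  obtain ⟨ν, hS, hsec⟩ := hex
  have hz : ∃ z : Fin p → ℝ, Y *ᵥ z = 0 ∧ z ≠ 0 := by
    by_contra hno
    push Not at hno
    obtain ⟨e, x, hx⟩ := exists_param (C : Matrix (Fin n) (Fin n) ℝ) C.2 Y hno ν hS
    exact hcon (Set.mem_iUnion.2 ⟨e, x, hx⟩)
  obtain ⟨z, hz, hz0⟩ := hz
  have hpsd := psd_of_singular _ Y hsec z hz hz0
  refine ⟨fun Z hZ => ?_, fun X _ hX hd => opt_of_psd _ Y hY ν hS hpsd X hX hd⟩
  refine opt_of_psd _ Y hY ν hS hpsd _ ?_ hZ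
  have := Matrix.posSemidef_self_mul_conjTranspose Z
  rwa [Matrix.conjTranspose_eq_transpose_of_trivial] at this

end
end
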